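/- The periodic-boundary CA on 5 cells with local rule g(x₁,x₂,x₃,x₄) = x₁ ⊕ x₃ ⊕ x₁x₄, i.e., the map T : F₂^5 → F₂^5 given by T(x)_i = x_i ⊕ x_{i+2} ⊕ x_i x_{i+3} with indices taken modulo 5, is a bijection. -/

import Mathlib

/-- The map has the explicit left inverse
`y ↦ fun i => y (i+1) + y (i+3) + y (i+1) y (i+4) + y (i+1) y (i+2) + y i y (i+1) y (i+2)`;
this is that inverse evaluated at one cell, with `a, b, c, d, e` the cells `i, …, i + 4`. -/
lemma inverse_rule_apply : ∀ a b c d e : ZMod 2,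
    (b + d + b * e) + (d + a + d * b) + (b + d + b * e) * (e + b + e * c) +
      (b + d + b * e) * (c + e + c * a) +
      (a + c + a * d) * (b + d + b * e) * (c + e + c * a) = a := by
  decide

theorem stmt6 :
    Function.Bijective (fun (x : Fin 5 → ZMod 2) => fun (i : Fin 5) =>
      x i + x (i + 2) + x i * x (i + 3)) := by
  refine Finite.injective_iff_bijective.mp (Function.LeftInverse.injective (g := fun y i =>
    y (i + 1) + y (i + 3) + y (i + 1) * y (i + 4) + y (i + 1) * y (i + 2) +
      y i * y (i + 1) * y (i + 2)) fun x => funext fun i => ?_)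
  have shift (j k l : Fin 5) (h : j + k = l) : i + j + k = i + l := by rw [add_assoc, h]
  simp only [shift 1 2 3 rfl, shift 1 3 4 rfl, shift 2 2 4 rfl, shift 2 3 0 rfl,
    shift 3 2 0 rfl, shift 3 3 1 rfl, shift 4 2 1 rfl, shift 4 3 2 rfl, add_zero]
  exact inverse_rule_apply (x i) (x (i + 1)) (x (i + 2)) (x (i + 3)) (x (i + 4))
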